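/- Let H₀, H₁, H₂ be complex Hilbert spaces and set K := H₁ × H₂ with the direct-sum Hilbert structure. Let R₀ : H₀ → H₀ and S, S' : K → H₀ be bounded operators with ‖S‖ ≤ s and ‖S'‖ ≤ s. Let A : H₁ → H₁, B : H₂ → H₁, E : H₁ → H₂, D : H₂ → H₂ be bounded, with A invertible, ‖A⁻¹‖ ≤ K₀, ‖B‖ ≤ K₀, ‖E‖ ≤ K₀ (K₀ ≥ 1), D invertible with ‖D⁻¹‖ ≤ ε, and ε·K₀³ ≤ 1/2; let T be the block operator T(x₁,x₂) = (Ax₁+Bx₂, Ex₁+Dx₂) (invertible by the Schur complement argument) and T₀ the block operator (x₁,x₂) ↦ (A⁻¹x₁, 0). Then ‖(R₀ - S∘T⁻¹∘(S')*) - (R₀ - S∘T₀∘(S')*)‖ ≤ 2·s²·ε·(1 + K₀²)². -/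

import Mathlib

/-!
Factor `T` as lower unitriangular times `diag(A, C)` times upper unitriangular, where
`C = D - E A⁻¹ B` is the Schur complement. Inverting the factors, `T⁻¹` is `diag(A⁻¹, C⁻¹)` between
two unitriangular operators, and replacing the middle factor by `diag(A⁻¹, 0)` gives `T₀`. Hence
`T⁻¹ - T₀` is controlled by `C⁻¹` alone; and `C` is a small relative perturbation of `D`, so a
Neumann series gives `‖C⁻¹‖ ≤ 2ε`.
-/

open ContinuousLinearMap

/-- The block operator `(x₁, x₂) ↦ (A x₁ + B x₂, E x₁ + D x₂)` on the Hilbert direct sum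
`H₁ ⊕ H₂`, realised as `WithLp 2 (H₁ × H₂)`. -/
noncomputable def blockOp {H₁ H₂ : Type*}
    [NormedAddCommGroup H₁] [InnerProductSpace ℂ H₁]
    [NormedAddCommGroup H₂] [InnerProductSpace ℂ H₂]
    (A : H₁ →L[ℂ] H₁) (B : H₂ →L[ℂ] H₁) (E : H₁ →L[ℂ] H₂) (D : H₂ →L[ℂ] H₂) :
    WithLp 2 (H₁ × H₂) →L[ℂ] WithLp 2 (H₁ × H₂) :=
  ((WithLp.prodContinuousLinearEquiv 2 ℂ H₁ H₂).symm :
      H₁ × H₂ →L[ℂ] WithLp 2 (H₁ × H₂)) ∘L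
    ((A ∘L ContinuousLinearMap.fst ℂ H₁ H₂ + B ∘L ContinuousLinearMap.snd ℂ H₁ H₂).prod
      (E ∘L ContinuousLinearMap.fst ℂ H₁ H₂ + D ∘L ContinuousLinearMap.snd ℂ H₁ H₂)) ∘L
    ((WithLp.prodContinuousLinearEquiv 2 ℂ H₁ H₂) :
      WithLp 2 (H₁ × H₂) →L[ℂ] H₁ × H₂)

open scoped Ring

section NormedRing

variable {R : Type*} [NormedRing R] {a x : R}

theorem isUnit_sub_of_norm_inverse_mul_lt_one [HasSummableGeomSeries R] (ha : IsUnit a)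
    (hx : ‖a⁻¹ʳ * x‖ < 1) : IsUnit (a - x) := by
  have hfactor : a - x = a * (1 - a⁻¹ʳ * x) := by
    rw [mul_sub, mul_one, Ring.mul_inverse_cancel_left a x ha]
  rw [hfactor]
  exact ha.mul (isUnit_one_sub_of_norm_lt_one hx)

theorem norm_inverse_sub_le (ha : IsUnit a) (hax : IsUnit (a - x)) (hx : ‖a⁻¹ʳ * x‖ < 1) :
    ‖(a - x)⁻¹ʳ‖ ≤ ‖a⁻¹ʳ‖ / (1 - ‖a⁻¹ʳ * x‖) := by
  set y := (a - x)⁻¹ʳ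
  have hfix : y = a⁻¹ʳ + a⁻¹ʳ * x * y := by
    have hy : a * y = 1 + x * y := by
      rw [← sub_eq_iff_eq_add, ← sub_mul, Ring.mul_inverse_cancel _ hax]
    calc y = a⁻¹ʳ * (a * y) := (Ring.inverse_mul_cancel_left a y ha).symm
      _ = a⁻¹ʳ + a⁻¹ʳ * x * y := by rw [hy, mul_add, mul_one, mul_assoc]
  have hbound : ‖y‖ ≤ ‖a⁻¹ʳ‖ + ‖a⁻¹ʳ * x‖ * ‖y‖ :=
    calc ‖y‖ = ‖a⁻¹ʳ + a⁻¹ʳ * x * y‖ := congrArg norm hfix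
      _ ≤ ‖a⁻¹ʳ‖ + ‖a⁻¹ʳ * x‖ * ‖y‖ := norm_add_le_of_le le_rfl (norm_mul_le _ _)
  rw [le_div_iff₀ (sub_pos.2 hx)]
  linarith

end NormedRing

section Inverse

variable {R M : Type*} [Semiring R] [AddCommMonoid M] [TopologicalSpace M] [Module R M]
  {A : M →L[R] M}

theorem comp_inverse_self (hA : IsUnit A) : A ∘L A⁻¹ʳ = .id R M :=
  Ring.mul_inverse_cancel A hA

theorem inverse_comp_self (hA : IsUnit A) : A⁻¹ʳ ∘L A = .id R M :=
  Ring.inverse_mul_cancel A hA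

end Inverse

section Operator

variable {𝕜 U V W : Type*} [NontriviallyNormedField 𝕜] [NormedAddCommGroup U] [NormedSpace 𝕜 U]
  [NormedAddCommGroup V] [NormedSpace 𝕜 V] [NormedAddCommGroup W] [NormedSpace 𝕜 W]

theorem norm_comp_le_of_le {f : V →L[𝕜] W} {g : U →L[𝕜] V} {a b : ℝ} (hf : ‖f‖ ≤ a)
    (hg : ‖g‖ ≤ b) : ‖f ∘L g‖ ≤ a * b :=
  (opNorm_comp_le f g).trans (mul_le_mul hf hg (norm_nonneg g) ((norm_nonneg f).trans hf))

/-- The Schur complement `D - E A⁻¹ B` of the pivot `A` in the block operator `[[A, B], [E, D]]`.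
As `A⁻¹` is `Ring.inverse A`, it is the junk value `D` when `A` is not invertible. -/
noncomputable def schurComplement (A : V →L[𝕜] V) (B : W →L[𝕜] V) (E : V →L[𝕜] W)
    (D : W →L[𝕜] W) : W →L[𝕜] W :=
  D - E ∘L A⁻¹ʳ ∘L B

variable {A : V →L[𝕜] V} {B : W →L[𝕜] V} {E : V →L[𝕜] W} {D : W →L[𝕜] W}

theorem isUnit_schurComplement [CompleteSpace W] (hD : IsUnit D)
    (h : ‖D⁻¹ʳ ∘L E ∘L A⁻¹ʳ ∘L B‖ < 1) : IsUnit (schurComplement A B E D) :=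
  isUnit_sub_of_norm_inverse_mul_lt_one hD h

theorem norm_inverse_schurComplement_le (hD : IsUnit D)
    (hC : IsUnit (schurComplement A B E D)) (h : ‖D⁻¹ʳ ∘L E ∘L A⁻¹ʳ ∘L B‖ < 1) :
    ‖(schurComplement A B E D)⁻¹ʳ‖ ≤ ‖D⁻¹ʳ‖ / (1 - ‖D⁻¹ʳ ∘L E ∘L A⁻¹ʳ ∘L B‖) :=
  norm_inverse_sub_le hD hC h

end Operator

section BlockOp

variable {H₁ H₂ : Type*} [NormedAddCommGroup H₁] [InnerProductSpace ℂ H₁]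
  [NormedAddCommGroup H₂] [InnerProductSpace ℂ H₂]

theorem blockOp_apply (A : H₁ →L[ℂ] H₁) (B : H₂ →L[ℂ] H₁) (E : H₁ →L[ℂ] H₂) (D : H₂ →L[ℂ] H₂)
    (x : WithLp 2 (H₁ × H₂)) :
    blockOp A B E D x = WithLp.toLp 2 (A x.fst + B x.snd, E x.fst + D x.snd) :=
  rfl

theorem blockOp_id :
    blockOp (.id ℂ H₁) 0 0 (.id ℂ H₂) = .id ℂ (WithLp 2 (H₁ × H₂)) := by
  ext x : 1
  simp only [blockOp_apply, id_apply, zero_apply, add_zero, zero_add]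
  rfl

theorem blockOp_add (A A' : H₁ →L[ℂ] H₁) (B B' : H₂ →L[ℂ] H₁) (E E' : H₁ →L[ℂ] H₂)
    (D D' : H₂ →L[ℂ] H₂) :
    blockOp A B E D + blockOp A' B' E' D' = blockOp (A + A') (B + B') (E + E') (D + D') := by
  ext x : 1
  simp [blockOp_apply, ← WithLp.toLp_add, add_add_add_comm]

theorem blockOp_comp (A A' : H₁ →L[ℂ] H₁) (B B' : H₂ →L[ℂ] H₁) (E E' : H₁ →L[ℂ] H₂)
    (D D' : H₂ →L[ℂ] H₂) :
    blockOp A B E D ∘L blockOp A' B' E' D' =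
      blockOp (A ∘L A' + B ∘L E') (A ∘L B' + B ∘L D')
        (E ∘L A' + D ∘L E') (E ∘L B' + D ∘L D') := by
  ext x : 1
  simp [blockOp_apply, add_add_add_comm]

variable {A : H₁ →L[ℂ] H₁} {B : H₂ →L[ℂ] H₁} {E : H₁ →L[ℂ] H₂} {D : H₂ →L[ℂ] H₂}

theorem blockOp_diag_comp_inverse (hA : IsUnit A) (hD : IsUnit D) :
    blockOp A 0 0 D ∘L blockOp A⁻¹ʳ 0 0 D⁻¹ʳ = .id ℂ _ := by
  simp [blockOp_comp, comp_inverse_self, hA, hD, blockOp_id]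

theorem blockOp_inverse_comp_diag (hA : IsUnit A) (hD : IsUnit D) :
    blockOp A⁻¹ʳ 0 0 D⁻¹ʳ ∘L blockOp A 0 0 D = .id ℂ _ := by
  simp [blockOp_comp, inverse_comp_self, hA, hD, blockOp_id]

theorem isUnit_blockOp_diag (hA : IsUnit A) (hD : IsUnit D) : IsUnit (blockOp A 0 0 D) :=
  isUnit_iff_exists.2 ⟨_, blockOp_diag_comp_inverse hA hD, blockOp_inverse_comp_diag hA hD⟩

theorem inverse_blockOp_diag (hA : IsUnit A) (hD : IsUnit D) :
    (blockOp A 0 0 D)⁻¹ʳ = blockOp A⁻¹ʳ 0 0 D⁻¹ʳ :=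
  Ring.inverse_unit ⟨_, _, blockOp_diag_comp_inverse hA hD, blockOp_inverse_comp_diag hA hD⟩

theorem blockOp_upper_comp_neg (B : H₂ →L[ℂ] H₁) :
    blockOp (.id ℂ H₁) B 0 (.id ℂ H₂) ∘L blockOp (.id ℂ H₁) (-B) 0 (.id ℂ H₂) = .id ℂ _ := by
  simp [blockOp_comp, blockOp_id]

theorem blockOp_upper_neg_comp (B : H₂ →L[ℂ] H₁) :
    blockOp (.id ℂ H₁) (-B) 0 (.id ℂ H₂) ∘L blockOp (.id ℂ H₁) B 0 (.id ℂ H₂) = .id ℂ _ := by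
  simpa using blockOp_upper_comp_neg (-B)

theorem isUnit_blockOp_upper (B : H₂ →L[ℂ] H₁) :
    IsUnit (blockOp (.id ℂ H₁) B 0 (.id ℂ H₂)) :=
  isUnit_iff_exists.2 ⟨_, blockOp_upper_comp_neg B, blockOp_upper_neg_comp B⟩

theorem inverse_blockOp_upper (B : H₂ →L[ℂ] H₁) :
    (blockOp (.id ℂ H₁) B 0 (.id ℂ H₂))⁻¹ʳ = blockOp (.id ℂ H₁) (-B) 0 (.id ℂ H₂) :=
  Ring.inverse_unit ⟨_, _, blockOp_upper_comp_neg B, blockOp_upper_neg_comp B⟩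

theorem blockOp_lower_comp_neg (E : H₁ →L[ℂ] H₂) :
    blockOp (.id ℂ H₁) 0 E (.id ℂ H₂) ∘L blockOp (.id ℂ H₁) 0 (-E) (.id ℂ H₂) = .id ℂ _ := by
  simp [blockOp_comp, blockOp_id]

theorem blockOp_lower_neg_comp (E : H₁ →L[ℂ] H₂) :
    blockOp (.id ℂ H₁) 0 (-E) (.id ℂ H₂) ∘L blockOp (.id ℂ H₁) 0 E (.id ℂ H₂) = .id ℂ _ := by
  simpa using blockOp_lower_comp_neg (-E)

theorem isUnit_blockOp_lower (E : H₁ →L[ℂ] H₂) :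
    IsUnit (blockOp (.id ℂ H₁) 0 E (.id ℂ H₂)) :=
  isUnit_iff_exists.2 ⟨_, blockOp_lower_comp_neg E, blockOp_lower_neg_comp E⟩

theorem inverse_blockOp_lower (E : H₁ →L[ℂ] H₂) :
    (blockOp (.id ℂ H₁) 0 E (.id ℂ H₂))⁻¹ʳ = blockOp (.id ℂ H₁) 0 (-E) (.id ℂ H₂) :=
  Ring.inverse_unit ⟨_, _, blockOp_lower_comp_neg E, blockOp_lower_neg_comp E⟩

theorem blockOp_eq_lower_comp_diag_comp_upper (hA : IsUnit A) :
    blockOp A B E D =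
      blockOp (.id ℂ H₁) 0 (E ∘L A⁻¹ʳ) (.id ℂ H₂) ∘L blockOp A 0 0 (schurComplement A B E D) ∘L
        blockOp (.id ℂ H₁) (A⁻¹ʳ ∘L B) 0 (.id ℂ H₂) := by
  have hAB : A ∘L A⁻¹ʳ ∘L B = B := by rw [← comp_assoc, comp_inverse_self hA, id_comp]
  simp [blockOp_comp, hAB, comp_assoc, inverse_comp_self hA, schurComplement]

theorem isUnit_blockOp (hA : IsUnit A) (hC : IsUnit (schurComplement A B E D)) :
    IsUnit (blockOp A B E D) := by
  rw [blockOp_eq_lower_comp_diag_comp_upper hA]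
  exact (isUnit_blockOp_lower _).mul ((isUnit_blockOp_diag hA hC).mul (isUnit_blockOp_upper _))

theorem inverse_blockOp (hA : IsUnit A) (hC : IsUnit (schurComplement A B E D)) :
    (blockOp A B E D)⁻¹ʳ =
      blockOp (.id ℂ H₁) (-(A⁻¹ʳ ∘L B)) 0 (.id ℂ H₂) ∘L
        blockOp A⁻¹ʳ 0 0 (schurComplement A B E D)⁻¹ʳ ∘L
          blockOp (.id ℂ H₁) 0 (-(E ∘L A⁻¹ʳ)) (.id ℂ H₂) := by
  rw [blockOp_eq_lower_comp_diag_comp_upper hA, ← mul_def, ← mul_def,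
    Ring.inverse_mul (.inl (isUnit_blockOp_lower _)),
    Ring.inverse_mul (.inr (isUnit_blockOp_upper _)), inverse_blockOp_lower,
    inverse_blockOp_diag hA hC, inverse_blockOp_upper, mul_assoc, mul_def, mul_def]

theorem inverse_blockOp_sub (hA : IsUnit A) (hC : IsUnit (schurComplement A B E D)) :
    (blockOp A B E D)⁻¹ʳ - blockOp A⁻¹ʳ 0 0 0 =
      blockOp (.id ℂ H₁) (-(A⁻¹ʳ ∘L B)) 0 (.id ℂ H₂) ∘L
        blockOp 0 0 0 (schurComplement A B E D)⁻¹ʳ ∘L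
          blockOp (.id ℂ H₁) 0 (-(E ∘L A⁻¹ʳ)) (.id ℂ H₂) := by
  rw [inverse_blockOp hA hC, sub_eq_iff_eq_add]
  simp [blockOp_comp, blockOp_add, add_comm]

theorem norm_blockOp_upper_right_le (B : H₂ →L[ℂ] H₁) :
    ‖blockOp (0 : H₁ →L[ℂ] H₁) B 0 (0 : H₂ →L[ℂ] H₂)‖ ≤ ‖B‖ := by
  refine opNorm_le_bound _ (norm_nonneg B) fun x => ?_
  simp only [blockOp_apply, zero_apply, add_zero, zero_add, WithLp.norm_toLp_fst]
  exact B.le_opNorm_of_le (WithLp.norm_snd_le H₁ x)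

theorem norm_blockOp_lower_left_le (E : H₁ →L[ℂ] H₂) :
    ‖blockOp (0 : H₁ →L[ℂ] H₁) 0 E (0 : H₂ →L[ℂ] H₂)‖ ≤ ‖E‖ := by
  refine opNorm_le_bound _ (norm_nonneg E) fun x => ?_
  simp only [blockOp_apply, zero_apply, add_zero, WithLp.norm_toLp_snd]
  exact E.le_opNorm_of_le (WithLp.norm_fst_le _ x)

theorem norm_blockOp_lower_right_le (D : H₂ →L[ℂ] H₂) :
    ‖blockOp (0 : H₁ →L[ℂ] H₁) 0 0 D‖ ≤ ‖D‖ := by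
  refine opNorm_le_bound _ (norm_nonneg D) fun x => ?_
  simp only [blockOp_apply, zero_apply, add_zero, zero_add, WithLp.norm_toLp_snd]
  exact D.le_opNorm_of_le (WithLp.norm_snd_le H₁ x)

theorem norm_blockOp_upper_le (B : H₂ →L[ℂ] H₁) :
    ‖blockOp (.id ℂ H₁) B 0 (.id ℂ H₂)‖ ≤ 1 + ‖B‖ := by
  have hsplit : blockOp (.id ℂ H₁) B 0 (.id ℂ H₂) = .id ℂ _ + blockOp 0 B 0 0 := by
    simp [← blockOp_id, blockOp_add]
  rw [hsplit]
  exact (opNorm_add_le _ _).trans (add_le_add norm_id_le (norm_blockOp_upper_right_le B))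

theorem norm_blockOp_lower_le (E : H₁ →L[ℂ] H₂) :
    ‖blockOp (.id ℂ H₁) 0 E (.id ℂ H₂)‖ ≤ 1 + ‖E‖ := by
  have hsplit : blockOp (.id ℂ H₁) 0 E (.id ℂ H₂) = .id ℂ _ + blockOp 0 0 E 0 := by
    simp [← blockOp_id, blockOp_add]
  rw [hsplit]
  exact (opNorm_add_le _ _).trans (add_le_add norm_id_le (norm_blockOp_lower_left_le E))

theorem norm_inverse_blockOp_sub_le (hA : IsUnit A) (hC : IsUnit (schurComplement A B E D)) :
    ‖(blockOp A B E D)⁻¹ʳ - blockOp A⁻¹ʳ 0 0 0‖ ≤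
      (1 + ‖A⁻¹ʳ ∘L B‖) * (‖(schurComplement A B E D)⁻¹ʳ‖ * (1 + ‖E ∘L A⁻¹ʳ‖)) := by
  rw [inverse_blockOp_sub hA hC, ← norm_neg (A⁻¹ʳ ∘L B), ← norm_neg (E ∘L A⁻¹ʳ)]
  exact norm_comp_le_of_le (norm_blockOp_upper_le _)
    (norm_comp_le_of_le (norm_blockOp_lower_right_le _) (norm_blockOp_lower_le _))

end BlockOp

theorem krein_resolvent_estimate_general {F G H₁ H₂ : Type*}
    [NormedAddCommGroup F] [NormedSpace ℂ F] [NormedAddCommGroup G] [NormedSpace ℂ G]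
    [NormedAddCommGroup H₁] [InnerProductSpace ℂ H₁]
    [NormedAddCommGroup H₂] [InnerProductSpace ℂ H₂] [CompleteSpace H₂]
    (R₀ : F →L[ℂ] G) (S : WithLp 2 (H₁ × H₂) →L[ℂ] G) (S' : F →L[ℂ] WithLp 2 (H₁ × H₂))
    (s s' : ℝ) (hS : ‖S‖ ≤ s) (hS' : ‖S'‖ ≤ s')
    (A : H₁ →L[ℂ] H₁) (B : H₂ →L[ℂ] H₁) (E : H₁ →L[ℂ] H₂) (D : H₂ →L[ℂ] H₂)
    (K₀ ε : ℝ) (hA : IsUnit A) (hAinv : ‖A⁻¹ʳ‖ ≤ K₀) (hB : ‖B‖ ≤ K₀) (hE : ‖E‖ ≤ K₀)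
    (hD : IsUnit D) (hDinv : ‖D⁻¹ʳ‖ ≤ ε) (hsmall : ε * K₀ ^ 3 ≤ 1 / 2) :
    IsUnit (blockOp A B E D) ∧
    ‖(R₀ - S ∘L (blockOp A B E D)⁻¹ʳ ∘L S') - (R₀ - S ∘L blockOp A⁻¹ʳ 0 0 0 ∘L S')‖
      ≤ 2 * (s * s') * ε * (1 + K₀ ^ 2) ^ 2 := by
  have hε : 0 ≤ ε := (norm_nonneg _).trans hDinv
  have hAB : ‖A⁻¹ʳ ∘L B‖ ≤ K₀ ^ 2 := (norm_comp_le_of_le hAinv hB).trans_eq (sq K₀).symm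
  have hEA : ‖E ∘L A⁻¹ʳ‖ ≤ K₀ ^ 2 := (norm_comp_le_of_le hE hAinv).trans_eq (sq K₀).symm
  have hDEAB : ‖D⁻¹ʳ ∘L E ∘L A⁻¹ʳ ∘L B‖ ≤ 1 / 2 :=
    (norm_comp_le_of_le hDinv (norm_comp_le_of_le hE hAB)).trans (by linarith)
  have hC : IsUnit (schurComplement A B E D) := isUnit_schurComplement hD (by linarith)
  have hCinv : ‖(schurComplement A B E D)⁻¹ʳ‖ ≤ 2 * ε :=
    calc _ ≤ ‖D⁻¹ʳ‖ / (1 - ‖D⁻¹ʳ ∘L E ∘L A⁻¹ʳ ∘L B‖) :=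
          norm_inverse_schurComplement_le hD hC (by linarith)
      _ ≤ ε / (1 - 1 / 2) := by gcongr
      _ = 2 * ε := by ring
  have hT : ‖(blockOp A B E D)⁻¹ʳ - blockOp A⁻¹ʳ 0 0 0‖ ≤
      (1 + K₀ ^ 2) * (2 * ε * (1 + K₀ ^ 2)) :=
    (norm_inverse_blockOp_sub_le hA hC).trans (by gcongr)
  refine ⟨isUnit_blockOp hA hC, ?_⟩
  rw [sub_sub_sub_cancel_left, norm_sub_rev, ← comp_sub, ← sub_comp]
  exact (norm_comp_le_of_le hS (norm_comp_le_of_le hT hS')).trans_eq (by ring)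

/-- Abstract core of the Kreĭn-formula resolvent estimate: replacing the
inverse of the block operator `T = [[A, B], [E, D]]` by `T₀ = [[A⁻¹, 0], [0, 0]]` in
`R₀ - S T⁻¹ (S')*` produces an error at most `2 s² ε (1 + K₀²)²`. -/
theorem krein_resolvent_estimate {H₀ H₁ H₂ : Type*}
    [NormedAddCommGroup H₀] [InnerProductSpace ℂ H₀] [CompleteSpace H₀]
    [NormedAddCommGroup H₁] [InnerProductSpace ℂ H₁] [CompleteSpace H₁]
    [NormedAddCommGroup H₂] [InnerProductSpace ℂ H₂] [CompleteSpace H₂]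
    (R₀ : H₀ →L[ℂ] H₀) (S S' : WithLp 2 (H₁ × H₂) →L[ℂ] H₀) (s : ℝ)
    (hS : ‖S‖ ≤ s) (hS' : ‖S'‖ ≤ s)
    (A : H₁ →L[ℂ] H₁) (B : H₂ →L[ℂ] H₁) (E : H₁ →L[ℂ] H₂) (D : H₂ →L[ℂ] H₂)
    (K₀ ε : ℝ) (hK₀ : 1 ≤ K₀) (hε : 0 < ε)
    (hA : IsUnit A) (hAinv : ‖(Ring.inverse A : H₁ →L[ℂ] H₁)‖ ≤ K₀)
    (hB : ‖B‖ ≤ K₀) (hE : ‖E‖ ≤ K₀)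
    (hD : IsUnit D) (hDinv : ‖(Ring.inverse D : H₂ →L[ℂ] H₂)‖ ≤ ε)
    (hsmall : ε * K₀ ^ 3 ≤ 1 / 2) :
    IsUnit (blockOp A B E D) ∧
    ‖(R₀ - S ∘L Ring.inverse (blockOp A B E D) ∘L adjoint S')
        - (R₀ - S ∘L blockOp (Ring.inverse A) 0 0 0 ∘L adjoint S')‖
      ≤ 2 * s ^ 2 * ε * (1 + K₀ ^ 2) ^ 2 := by
  simpa only [sq s] using krein_resolvent_estimate_general R₀ S (adjoint S') s s hS
    ((LinearIsometryEquiv.norm_map adjoint S').trans_le hS') A B E D K₀ ε hA hAinv hB hE hD hDinv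
    hsmall
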